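/- Let θ ∈ [2π/3, π] and let u, v ∈ ℝ² be unit vectors with ⟪u,v⟫ = cos θ, and let M'(u,v) = {p ∈ ℝ² : ‖p‖ ≤ 1, ⟪p,u⟫ ≤ 1/2, ⟪p,v⟫ ≤ 1/2}. Then for every integer n ≥ 3 and every finite set S ⊆ M'(u,v) with at most n points, there exists a finite set T ⊆ M with at most n points such that volume(convexHull ℝ T) ≥ volume(convexHull ℝ S). -/

import Mathlib

open Metric MeasureTheory Real
open scoped RealInnerProductSpace

noncomputable section

/-- The Euclidean plane. -/
abbrev Pt := EuclideanSpace ℝ (Fin 2)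

/-- The set `M`: the closed unit disk truncated by two chords of length `√3` sharing the
endpoint `(0, −1)`. -/
def M : Set Pt :=
  {p | p 0 ^ 2 + p 1 ^ 2 ≤ 1 ∧ Real.sqrt 3 * p 0 - p 1 ≤ 1 ∧ -Real.sqrt 3 * p 0 - p 1 ≤ 1}

/-- The set `M'(u,v)`: the closed unit disk truncated by two non-crossing chords of length `√3`
whose bounding half-planes have inward normals `u` and `v`. -/
def M' (u v : Pt) : Set Pt := {p | ‖p‖ ≤ 1 ∧ ⟪p, u⟫ ≤ 1 / 2 ∧ ⟪p, v⟫ ≤ 1 / 2}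

/-! Along every line parallel to `p - q`, the slice of a hull with a vertex on the segment from `p`
to `q` is contained in the corresponding weighted Minkowski sum of the slices for `p` and for `q`.
Hence the area of a hull is a convex function of each vertex, and the vertices of an inscribed
polygon may be moved one at a time to extreme points of `M' u v`. These lie on two arcs of the unit
circle. Let `p` and `q` be the last vertices, in counterclockwise order, on the two arcs. The line
`pq` cuts the polygon into two pieces, each carrying the vertices of one arc. Reflecting one piece
across the perpendicular bisector of `pq` keeps it on its side of the line and swaps `p` and `q`, so
no area is lost. All reflected vertices now lie, together with the vertices of the other piece, in
the union of `{q}` and the cap opposite to `q`, a rotated copy of which is contained in `M`. -/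

section MoveVertices
open scoped Pointwise

theorem volume_add_le_of_isCompact_of_convex {I J : Set ℝ} (hI : IsCompact I) (hIc : Convex ℝ I)
    (hJ : IsCompact J) (hJc : Convex ℝ J) : volume (I + J) ≤ volume I + volume J := by
  rcases I.eq_empty_or_nonempty with rfl | hI₀
  · simp
  rcases J.eq_empty_or_nonempty with rfl | hJ₀
  · simp
  have hI_eq := eq_Icc_of_connected_compact ⟨hI₀, hIc.isPreconnected⟩ hI
  have hJ_eq := eq_Icc_of_connected_compact ⟨hJ₀, hJc.isPreconnected⟩ hJ
  have hI_le : sInf I ≤ sSup I := Set.nonempty_Icc.1 (hI_eq ▸ hI₀)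
  have hJ_le : sInf J ≤ sSup J := Set.nonempty_Icc.1 (hJ_eq ▸ hJ₀)
  calc volume (I + J)
      ≤ volume (Set.Icc (sInf I + sInf J) (sSup I + sSup J)) := by
        conv_lhs => rw [hI_eq, hJ_eq]
        exact measure_mono (Set.Icc_add_Icc_subset _ _ _ _)
    _ = volume I + volume J := by
        conv_rhs => rw [hI_eq, hJ_eq]
        rw [Real.volume_Icc, Real.volume_Icc, Real.volume_Icc,
          ← ENNReal.ofReal_add (sub_nonneg.2 hI_le) (sub_nonneg.2 hJ_le)]
        congr 1
        ring

/- When the vertex moves along `p - q`, a point of the hull moves with it in proportion to the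
weight `r` that it gives to this vertex. -/
theorem exists_add_smul_sub_mem_convexHull_insert {E : Type*} [AddCommGroup E] [Module ℝ E]
    {s : Set E} {p q z : E} {a b : ℝ} (hab : a + b = 1)
    (hz : z ∈ convexHull ℝ (insert (a • p + b • q) s)) :
    ∃ r : ℝ, z + (b * r) • (p - q) ∈ convexHull ℝ (insert p s) ∧
      z - (a * r) • (p - q) ∈ convexHull ℝ (insert q s) := by
  obtain rfl : a = 1 - b := by linarith
  rcases s.eq_empty_or_nonempty with rfl | hs
  · obtain rfl : z = (1 - b) • p + b • q := by simpa using hz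
    refine ⟨1, ?_, ?_⟩ <;> simp only [insert_empty_eq, convexHull_singleton, Set.mem_singleton_iff]
      <;> module
  · simp only [convexHull_insert hs, convexJoin_singleton_left, Set.mem_iUnion, segment,
      Set.mem_ofPred_eq] at hz ⊢
    obtain ⟨y, hy, c, d, hc, hd, hcd, rfl⟩ := hz
    exact ⟨c, ⟨y, hy, c, d, hc, hd, hcd, by module⟩, ⟨y, hy, c, d, hc, hd, hcd, by module⟩⟩

theorem isCompact_slice {E : Type*} [NormedAddCommGroup E] [NormedSpace ℝ E] {K : Set E}
    (hK : IsCompact K) (y : E) {w : E} (hw : w ≠ 0) : IsCompact {t : ℝ | y + t • w ∈ K} :=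
  ((Homeomorph.addLeft y).isClosedEmbedding.comp
    (isClosedEmbedding_smul_left hw)).isCompact_preimage hK

theorem convex_slice {E : Type*} [AddCommGroup E] [Module ℝ E] {K : Set E} (hK : Convex ℝ K)
    (y w : E) : Convex ℝ {t : ℝ | y + t • w ∈ K} :=
  (hK.translate_preimage_right y).linear_preimage (LinearMap.toSpanSingleton ℝ E w)

theorem exists_mem_extremePoints_ge_of_convexOn {E : Type*} [AddCommGroup E] [Module ℝ E]
    [TopologicalSpace E] [T2Space E] [IsTopologicalAddGroup E] [ContinuousSMul ℝ E]
    [LocallyConvexSpace ℝ E] {K C : Set E} (hK : IsCompact K) (hKC : K ⊆ C) {f : E → ℝ}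
    (hf : ConvexOn ℝ C f) (hf_cont : ContinuousOn f K) {x : E} (hx : x ∈ K) :
    ∃ e ∈ K.extremePoints ℝ, f x ≤ f e := by
  obtain ⟨y, hy, hy_max⟩ := hK.exists_isMaxOn ⟨x, hx⟩ hf_cont
  -- An extreme point of the face of maximizers is an extreme point of `K`.
  have h_face : IsExtreme ℝ K (K ∩ f ⁻¹' {f y}) := by
    refine ⟨Set.inter_subset_left, fun z hz z' hz' w hw hzw => ⟨hz, ?_⟩⟩
    refine (isMaxOn_iff.1 hy_max z hz).antisymm (not_lt.1 fun hlt => ?_)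
    have hw_eq : f w = f y := hw.2
    exact (hf.lt_right_of_left_lt (hKC hz) (hKC hz') hzw (hw_eq ▸ hlt)).not_ge
      (hw_eq ▸ isMaxOn_iff.1 hy_max z' hz')
  have h_compact : IsCompact (K ∩ f ⁻¹' {f y}) :=
    hK.of_isClosed_subset (hf_cont.preimage_isClosed_of_isClosed hK.isClosed isClosed_singleton)
      Set.inter_subset_left
  obtain ⟨e, he⟩ := h_compact.extremePoints_nonempty ⟨y, hy, rfl⟩
  have he_eq : f e = f y := (extremePoints_subset he).2
  exact ⟨e, h_face.extremePoints_subset_extremePoints he,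
    (isMaxOn_iff.1 hy_max x hx).trans_eq he_eq.symm⟩

variable {E : Type*} [NormedAddCommGroup E] [NormedSpace ℝ E] [FiniteDimensional ℝ E]
  [MeasurableSpace E] [BorelSpace E]

theorem measurable_volume_slice {K : Set E} (hK : MeasurableSet K) (w : E) :
    Measurable fun y => volume {t : ℝ | y + t • w ∈ K} := by
  have h_line : Measurable fun x : E × ℝ => x.1 + x.2 • w := by fun_prop
  exact measurable_measure_prodMk_left (h_line hK)

variable (μ : Measure E) [μ.IsAddHaarMeasure]

theorem exists_measure_eq_lintegral_volume_slice {w : E} (hw : w ≠ 0) :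
    ∃ ν : Measure E, ∀ K : Set E, MeasurableSet K →
      μ K = ∫⁻ y, volume {t : ℝ | y + t • w ∈ K} ∂ν := by
  obtain ⟨f, hf⟩ := SeparatingDual.exists_eq_one (R := ℝ) hw
  let e : E ≃L[ℝ] ℝ × f.ker := ContinuousLinearEquiv.equivOfRightInverse f
    (ContinuousLinearMap.toSpanSingleton ℝ w) fun t => by simp [hf]
  have he (t : ℝ) (y : f.ker) : e.symm (t, y) = y + t • w := by
    simp [e, add_comm]
  let : MeasurableSpace f.ker := borel _
  have : BorelSpace f.ker := ⟨rfl⟩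
  let κ : Measure f.ker := Measure.addHaar
  let c : NNReal := μ.addHaarScalarFactor ((volume.prod κ).map e.symm)
  have hμ : μ = c • (volume.prod κ).map e.symm := Measure.isAddLeftInvariant_eq_smul _ _
  refine ⟨c • κ.map (↑), fun K hK => ?_⟩
  calc μ K = c • ((volume : Measure ℝ).prod κ) (e.symm ⁻¹' K) := by
        rw [hμ, Measure.smul_apply, Measure.map_apply e.symm.continuous.measurable hK]
    _ = c • ∫⁻ y : f.ker, volume {t : ℝ | y + t • w ∈ K} ∂κ := by
        rw [Measure.prod_apply_symm (e.symm.continuous.measurable hK)]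
        simp only [Set.preimage, Set.mem_ofPred_eq, he]
    _ = ∫⁻ y, volume {t : ℝ | y + t • w ∈ K} ∂(c • κ.map (↑)) := by
        rw [lintegral_smul_measure,
          lintegral_map (measurable_volume_slice hK w) continuous_subtype_val.measurable]

theorem measure_convexHull_insert_convexComb_le {s : Set E} (hs : s.Finite) (p q : E) {a b : ℝ}
    (ha : 0 ≤ a) (hb : 0 ≤ b) (hab : a + b = 1) :
    μ (convexHull ℝ (insert (a • p + b • q) s)) ≤
      ENNReal.ofReal a * μ (convexHull ℝ (insert p s)) +
        ENNReal.ofReal b * μ (convexHull ℝ (insert q s)) := by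
  rcases eq_or_ne p q with rfl | hpq
  · rw [← add_mul, ← ENNReal.ofReal_add ha hb, ← add_smul, hab, one_smul, ENNReal.ofReal_one,
      one_mul]
  have hw := sub_ne_zero.2 hpq
  obtain ⟨ν, hν⟩ := exists_measure_eq_lintegral_volume_slice μ hw
  have h_compact (x : E) := (hs.insert x).isCompact_convexHull ℝ
  let slice (x y : E) : Set ℝ := {t | y + t • (p - q) ∈ convexHull ℝ (insert x s)}
  have h_slice_compact (x y : E) : IsCompact (slice x y) :=
    isCompact_slice (h_compact x) y hw
  have h_slice_convex (x y : E) : Convex ℝ (slice x y) :=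
    convex_slice (convex_convexHull ℝ _) y _
  have h_subset (y : E) : slice (a • p + b • q) y ⊆ a • slice p y + b • slice q y := by
    intro t ht
    obtain ⟨r, hp, hq⟩ := exists_add_smul_sub_mem_convexHull_insert hab ht
    refine ⟨_, ⟨t + b * r, ?_, rfl⟩, _, ⟨t - a * r, ?_, rfl⟩, ?_⟩
    · simpa only [slice, Set.mem_ofPred_eq, add_smul, add_assoc] using hp
    · simpa only [slice, Set.mem_ofPred_eq, sub_smul, add_sub_assoc] using hq
    · simp only [smul_eq_mul]
      linear_combination t * hab
  have h_volume (y : E) : volume (slice (a • p + b • q) y) ≤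
      ENNReal.ofReal a * volume (slice p y) + ENNReal.ofReal b * volume (slice q y) := by
    have h := volume_add_le_of_isCompact_of_convex ((h_slice_compact p y).smul a)
      ((h_slice_convex p y).smul a) ((h_slice_compact q y).smul b) ((h_slice_convex q y).smul b)
    simp only [Measure.addHaar_smul, Module.finrank_self, pow_one, abs_of_nonneg ha,
      abs_of_nonneg hb] at h
    exact (measure_mono (h_subset y)).trans h
  simp only [hν _ (h_compact _).measurableSet]
  rw [← lintegral_const_mul' _ _ ENNReal.ofReal_ne_top,
    ← lintegral_const_mul' _ _ ENNReal.ofReal_ne_top, ← lintegral_add_left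
      ((measurable_volume_slice (h_compact p).measurableSet _).const_mul _)]
  exact lintegral_mono h_volume

theorem convexOn_measureReal_convexHull_insert {s : Set E} (hs : s.Finite) :
    ConvexOn ℝ Set.univ fun x => μ.real (convexHull ℝ (insert x s)) := by
  refine ⟨convex_univ, fun p _ q _ a b ha hb hab => ?_⟩
  have h_finite (x : E) : μ (convexHull ℝ (insert x s)) ≠ ⊤ :=
    ((hs.insert x).isCompact_convexHull ℝ).measure_ne_top
  have h_le := measure_convexHull_insert_convexComb_le μ hs p q ha hb hab
  rw [← ENNReal.toReal_le_toReal (h_finite _) (by finiteness [h_finite p, h_finite q]),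
    ENNReal.toReal_add (by finiteness [h_finite p]) (by finiteness [h_finite q]),
    ENNReal.toReal_mul, ENNReal.toReal_mul, ENNReal.toReal_ofReal ha,
    ENNReal.toReal_ofReal hb] at h_le
  exact h_le

theorem exists_finset_subset_extremePoints_measure_convexHull_union_ge {K : Set E}
    (hK : IsCompact K) {S : Finset E} (hS : (S : Set E) ⊆ K) {R : Set E} (hR : R.Finite) :
    ∃ T : Finset E, (T : Set E) ⊆ K.extremePoints ℝ ∧ T.card ≤ S.card ∧
      μ (convexHull ℝ (S ∪ R)) ≤ μ (convexHull ℝ (T ∪ R)) := by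
  classical
  induction S using Finset.induction_on generalizing R with
  | empty => exact ⟨∅, by simp⟩
  | insert x S hxS ih =>
    rw [Finset.coe_insert, Set.insert_subset_iff] at hS
    have h_finite (y : E) : μ (convexHull ℝ (insert y (S ∪ R))) ≠ ⊤ :=
      (((S.finite_toSet.union hR).insert y).isCompact_convexHull ℝ).measure_ne_top
    have h_convex := convexOn_measureReal_convexHull_insert μ (S.finite_toSet.union hR)
    obtain ⟨e, he, hxe⟩ := exists_mem_extremePoints_ge_of_convexOn hK (Set.subset_univ K) h_convex
      h_convex.locallyLipschitz.continuous.continuousOn hS.1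
    obtain ⟨T, hT, hT_card, hT_measure⟩ := ih hS.2 (hR.insert e)
    refine ⟨insert e T, ?_, ?_, ?_⟩
    · rw [Finset.coe_insert, Set.insert_subset_iff]
      exact ⟨he, hT⟩
    · grw [Finset.card_insert_le, Finset.card_insert_of_notMem hxS, hT_card]
    · rw [Finset.coe_insert, Finset.coe_insert, Set.insert_union, Set.insert_union]
      rw [Set.union_insert, Set.union_insert] at hT_measure
      exact ((ENNReal.toReal_le_toReal (h_finite x) (h_finite e)).1 hxe).trans hT_measure

theorem exists_finset_subset_extremePoints_measure_convexHull_ge {K : Set E}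
    (hK : IsCompact K) {S : Finset E} (hS : (S : Set E) ⊆ K) :
    ∃ T : Finset E, (T : Set E) ⊆ K.extremePoints ℝ ∧ T.card ≤ S.card ∧
      μ (convexHull ℝ S) ≤ μ (convexHull ℝ T) := by
  simpa only [Set.union_empty] using
    exists_finset_subset_extremePoints_measure_convexHull_union_ge μ hK hS Set.finite_empty

end MoveVertices

section ExtremePoints
open scoped Topology

theorem notMem_extremePoints_of_eventually_mem {E : Type*} [AddCommGroup E] [Module ℝ E]
    {K : Set E} {p w : E} (hw : w ≠ 0) (h : ∀ᶠ t in 𝓝 (0 : ℝ), p + t • w ∈ K) :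
    p ∉ K.extremePoints ℝ := by
  intro hp
  have h_neg : ∀ᶠ t in 𝓝 (0 : ℝ), p + -t • w ∈ K :=
    (continuous_neg.tendsto' (0 : ℝ) 0 neg_zero).eventually h
  obtain ⟨t, ⟨ht_add, ht_sub⟩, ht : t ≠ 0⟩ :=
    ((h.and h_neg).filter_mono nhdsWithin_le_nhds |>.and self_mem_nhdsWithin).exists
      (f := 𝓝[≠] 0)
  have h_mid : p ∈ openSegment ℝ (p + t • w) (p + -t • w) :=
    ⟨1 / 2, 1 / 2, by norm_num, by norm_num, by norm_num, by module⟩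
  have h_eq : p + t • w = p := hp.2 ht_add ht_sub h_mid
  exact smul_ne_zero ht hw (add_eq_left.1 h_eq)

theorem exists_ne_zero_inner_eq_zero {E : Type*} [NormedAddCommGroup E] [InnerProductSpace ℝ E]
    [FiniteDimensional ℝ E] (hE : 1 < Module.finrank ℝ E) (u : E) : ∃ w ≠ 0, ⟪w, u⟫ = 0 := by
  have h_ker : (innerSL ℝ u).ker ≠ ⊥ :=
    LinearMap.ker_ne_bot_of_finrank_lt (by rwa [Module.finrank_self])
  obtain ⟨w, hw, hw₀⟩ := Submodule.exists_mem_ne_zero_of_ne_bot h_ker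
  exact ⟨w, hw₀, by rwa [real_inner_comm]⟩

theorem isCompact_M' (u v : Pt) : IsCompact (M' u v) := by
  have hu : IsClosed {p : Pt | ⟪p, u⟫ ≤ 1 / 2} := isClosed_le (by fun_prop) continuous_const
  have hv : IsClosed {p : Pt | ⟪p, v⟫ ≤ 1 / 2} := isClosed_le (by fun_prop) continuous_const
  have h_eq : M' u v = closedBall 0 1 ∩ ({p | ⟪p, u⟫ ≤ 1 / 2} ∩ {p | ⟪p, v⟫ ≤ 1 / 2}) := by
    ext p
    simp [M']
  exact h_eq ▸ (isCompact_closedBall 0 1).inter_right (hu.inter hv)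

theorem M'_comm (u v : Pt) : M' u v = M' v u := by
  simp only [M', and_comm]

theorem notMem_extremePoints_M'_of_norm_lt_one {u v p : Pt} (hp : ‖p‖ < 1) (hpu : ⟪p, u⟫ ≤ 1 / 2)
    (hpv : ⟪p, v⟫ < 1 / 2) : p ∉ (M' u v).extremePoints ℝ := by
  obtain ⟨w, hw, hwu⟩ := exists_ne_zero_inner_eq_zero (by simp) u
  refine notMem_extremePoints_of_eventually_mem hw ?_
  have h_norm : ∀ᶠ t in 𝓝 (0 : ℝ), ‖p + t • w‖ < 1 :=
    ContinuousAt.eventually_lt (by fun_prop) continuousAt_const (by simpa using hp)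
  have h_inner : ∀ᶠ t in 𝓝 (0 : ℝ), ⟪p + t • w, v⟫ < 1 / 2 :=
    ContinuousAt.eventually_lt (by fun_prop) continuousAt_const (by simpa using hpv)
  filter_upwards [h_norm, h_inner] with t ht_norm ht_inner
  refine ⟨ht_norm.le, ?_, ht_inner.le⟩
  rwa [inner_add_left, inner_smul_left, hwu, mul_zero, add_zero]

theorem extremePoints_M'_subset_sphere {u v : Pt} (hu : ‖u‖ = 1) (hv : ‖v‖ = 1)
    (huv : ⟪u, v⟫ ≤ -1 / 2) : (M' u v).extremePoints ℝ ⊆ M' u v ∩ sphere 0 1 := by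
  intro p hp
  obtain ⟨hp_norm, hpu, hpv⟩ := extremePoints_subset hp
  refine ⟨extremePoints_subset hp, mem_sphere_zero_iff_norm.2 ?_⟩
  refine hp_norm.antisymm (not_lt.1 fun hlt => ?_)
  have h_norm : ‖u + v‖ ≤ 1 := by
    rw [← sq_le_one_iff₀ (norm_nonneg _), norm_add_sq_real, hu, hv]
    linarith
  have h_inner : ⟪p, u⟫ + ⟪p, v⟫ < 1 := calc
    ⟪p, u⟫ + ⟪p, v⟫ = ⟪p, u + v⟫ := (inner_add_right _ _ _).symm
    _ ≤ ‖p‖ * ‖u + v‖ := real_inner_le_norm _ _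
    _ ≤ ‖p‖ := mul_le_of_le_one_right (norm_nonneg _) h_norm
    _ < 1 := hlt
  rcases hpv.lt_or_eq with hpv_lt | hpv_eq
  · exact notMem_extremePoints_M'_of_norm_lt_one hlt hpu hpv_lt hp
  · rw [M'_comm] at hp
    exact notMem_extremePoints_M'_of_norm_lt_one hlt hpv (by linarith) hp

end ExtremePoints

/-- The point of the unit circle at angle `t`. -/
def circlePt (t : ℝ) : Pt := !₂[cos t, sin t]

theorem inner_circlePt (s t : ℝ) : ⟪circlePt s, circlePt t⟫ = cos (s - t) := by
  simp [circlePt, PiLp.inner_apply, cos_sub, mul_comm]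

theorem norm_circlePt (t : ℝ) : ‖circlePt t‖ = 1 := by
  simp [circlePt, EuclideanSpace.norm_eq]

theorem exists_circlePt_eq {p : Pt} (hp : ‖p‖ = 1) (a : ℝ) :
    ∃ t ∈ Set.Ico a (a + 2 * π), circlePt t = p := by
  have h_norm : ‖(⟨p 0, p 1⟩ : ℂ)‖ = 1 := by
    rw [← hp, EuclideanSpace.norm_eq, Complex.norm_eq_sqrt_sq_add_sq, Fin.sum_univ_two]
    simp
  have h_periodic : Function.Periodic circlePt (2 * π) := fun t => by simp [circlePt]
  obtain ⟨s, hs⟩ := (Complex.norm_eq_one_iff _).1 h_norm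
  obtain ⟨t, ht, hst⟩ := h_periodic.exists_mem_Ico two_pi_pos s a
  refine ⟨t, ht, hst ▸ ?_⟩
  rw [Complex.ext_iff, Complex.exp_ofReal_mul_I_re, Complex.exp_ofReal_mul_I_im] at hs
  ext i
  fin_cases i
  exacts [hs.1, hs.2]

theorem cos_le_cos_iff_abs_mem_Icc {c x : ℝ} (hc : c ∈ Set.Icc 0 π) (hx : |x| ≤ 2 * π) :
    cos x ≤ cos c ↔ |x| ∈ Set.Icc c (2 * π - c) := by
  rw [← cos_abs x, Set.mem_Icc]
  rcases le_total |x| π with h | h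
  · rw [strictAntiOn_cos.le_iff_ge ⟨abs_nonneg x, h⟩ hc]
    exact ⟨fun hcx => ⟨hcx, by linarith [hc.2]⟩, And.left⟩
  · rw [← cos_two_pi_sub |x|, strictAntiOn_cos.le_iff_ge ⟨by linarith, by linarith⟩ hc]
    exact ⟨fun hcx => ⟨by linarith [hc.2], by linarith⟩, fun hcx => by linarith [hcx.2]⟩

theorem cos_le_half_iff {x : ℝ} (hx : |x| ≤ 2 * π) :
    cos x ≤ 1 / 2 ↔ |x| ∈ Set.Icc (π / 3) (5 * π / 3) := by
  rw [← cos_pi_div_three, cos_le_cos_iff_abs_mem_Icc ⟨by positivity, by linarith [pi_pos]⟩ hx]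
  ring_nf

theorem cos_le_neg_half_iff {x : ℝ} (hx : |x| ≤ 2 * π) :
    cos x ≤ -1 / 2 ↔ |x| ∈ Set.Icc (2 * π / 3) (4 * π / 3) := by
  have h_cos : (-1 / 2 : ℝ) = cos (2 * π / 3) := by
    rw [show 2 * π / 3 = π - π / 3 by ring, cos_pi_sub, cos_pi_div_three, neg_div]
  rw [h_cos, cos_le_cos_iff_abs_mem_Icc ⟨by positivity, by linarith [pi_pos]⟩ hx]
  ring_nf

theorem exists_M'_inter_sphere_subset_arcs {u v : Pt} (hu : ‖u‖ = 1) (hv : ‖v‖ = 1)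
    (huv : ⟪u, v⟫ ≤ -1 / 2) :
    ∃ a b : ℝ, a ≤ b ∧ b ≤ a + 2 * π / 3 ∧ M' u v ∩ sphere 0 1 ⊆
      circlePt '' Set.Icc a b ∪ circlePt '' Set.Icc (b + 2 * π / 3) (a + 4 * π / 3) := by
  obtain ⟨α, -, rfl⟩ := exists_circlePt_eq hu 0
  obtain ⟨β, ⟨hαβ, hβα⟩, rfl⟩ := exists_circlePt_eq hv α
  rw [real_inner_comm, inner_circlePt, cos_le_neg_half_iff (by grind), abs_of_nonneg (by linarith)]
    at huv
  refine ⟨α + π / 3, β - π / 3, by linarith [huv.1], by linarith [huv.2], ?_⟩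
  rintro p ⟨⟨-, hpu, hpv⟩, hp⟩
  obtain ⟨t, ⟨hαt, htα⟩, rfl⟩ := exists_circlePt_eq (mem_sphere_zero_iff_norm.1 hp) α
  rw [inner_circlePt, cos_le_half_iff (by grind), abs_of_nonneg (by linarith)] at hpu
  rw [inner_circlePt, cos_le_half_iff (by grind)] at hpv
  rcases le_total t β with htβ | hβt
  · rw [abs_of_nonpos (by linarith)] at hpv
    exact .inl ⟨t, ⟨by linarith [hpu.1], by linarith [hpv.1]⟩, rfl⟩
  · rw [abs_of_nonneg (by linarith)] at hpv
    exact .inr ⟨t, ⟨by linarith [hpv.1], by linarith [hpu.2]⟩, rfl⟩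

theorem exists_last_of_finset_subset_image_Icc {α X : Type*} [LinearOrder α] {f : α → X} {a b : α}
    {A : Finset X} (hA : A.Nonempty) (hAf : (A : Set X) ⊆ f '' Set.Icc a b) :
    ∃ c ∈ Set.Icc a b, f c ∈ A ∧ (A : Set X) ⊆ f '' Set.Icc a c := by
  classical
  obtain ⟨I, hI, rfl⟩ := Finset.subset_set_image_iff.1 hAf
  rw [Finset.image_nonempty] at hA
  refine ⟨I.max' hA, hI (I.max'_mem hA), Finset.mem_image_of_mem f (I.max'_mem hA), ?_⟩
  rw [Finset.coe_image]
  exact Set.image_mono fun t ht => ⟨(hI ht).1, I.le_max' t ht⟩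

theorem convexHull_union_inter_halfSpace_subset {E : Type*} [AddCommGroup E] [Module ℝ E]
    {A B C : Set E} {f : E →ₗ[ℝ] ℝ} {c : ℝ} (hA : A.Nonempty) (hB : B.Nonempty)
    (hfB : ∀ y ∈ B, c ≤ f y) (hC : Convex ℝ C) (hAC : A ⊆ C)
    (h_section : convexHull ℝ (A ∪ B) ∩ {z | f z = c} ⊆ C) :
    convexHull ℝ (A ∪ B) ∩ {z | f z ≤ c} ⊆ C := by
  rintro x ⟨hx, hfx : f x ≤ c⟩
  obtain ⟨a, ha, b, hb, hxab⟩ : ∃ a ∈ convexHull ℝ A, ∃ b ∈ convexHull ℝ B, x ∈ segment ℝ a b := by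
    rwa [convexHull_union hA hB, mem_convexJoin] at hx
  have hfb : c ≤ f b := convexHull_min hfB (convex_halfSpace_ge f.isLinear c) hb
  obtain ⟨z, hz, hfz⟩ : c ∈ f '' segment ℝ x b := by
    have h := image_segment ℝ f.toAffineMap x b
    rw [LinearMap.coe_toAffineMap, segment_eq_Icc (hfx.trans hfb)] at h
    exact h ▸ ⟨hfx, hfb⟩
  have hzC : z ∈ C := by
    refine h_section ⟨(convex_convexHull ℝ _).segment_subset hx ?_ hz, hfz⟩
    exact convexHull_mono Set.subset_union_right hb
  have hx_az : Wbtw ℝ a x z :=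
    (mem_segment_iff_wbtw.1 hxab).trans_right_left (mem_segment_iff_wbtw.1 hz)
  exact hC.segment_subset (convexHull_min hAC hC ha) hzC (mem_segment_iff_wbtw.2 hx_az)

theorem convexHull_union_subset_of_section_subset_segment {E : Type*} [AddCommGroup E]
    [Module ℝ E] {A B : Set E} {f : E →ₗ[ℝ] ℝ} {c : ℝ} {p q : E} (hp : p ∈ A) (hq : q ∈ B)
    (hA : ∀ x ∈ A, f x ≤ c) (hB : ∀ y ∈ B, c ≤ f y)
    (h_section : convexHull ℝ (A ∪ B) ∩ {z | f z = c} ⊆ segment ℝ p q) :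
    convexHull ℝ (A ∪ B) ⊆ convexHull ℝ (insert q A) ∪ convexHull ℝ (insert p B) := by
  have h_segment {s : Set E} (hps : p ∈ s) (hqs : q ∈ s) : segment ℝ p q ⊆ convexHull ℝ s :=
    segment_subset_convexHull hps hqs
  have h_lower : convexHull ℝ (A ∪ B) ∩ {z | f z ≤ c} ⊆ convexHull ℝ (insert q A) :=
    convexHull_union_inter_halfSpace_subset ⟨p, hp⟩ ⟨q, hq⟩ hB (convex_convexHull ℝ _)
      ((Set.subset_insert q A).trans (subset_convexHull ℝ _))
      (h_section.trans (h_segment (.inr hp) (.inl rfl)))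
  have h_upper : convexHull ℝ (A ∪ B) ∩ {z | c ≤ f z} ⊆ convexHull ℝ (insert p B) := by
    have h := convexHull_union_inter_halfSpace_subset (f := -f) (c := -c) ⟨q, hq⟩ ⟨p, hp⟩
      (fun x hx => neg_le_neg (hA x hx)) (convex_convexHull ℝ _)
      ((Set.subset_insert p B).trans (subset_convexHull ℝ _))
    simp only [LinearMap.neg_apply, neg_inj, neg_le_neg_iff, Set.union_comm B A] at h
    exact h (h_section.trans (h_segment (.inl rfl) (.inr hq)))
  exact fun z hz => (le_total (f z) c).imp (fun h => h_lower ⟨hz, h⟩) fun h => h_upper ⟨hz, h⟩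

theorem measure_levelSet_eq_zero {E : Type*} [NormedAddCommGroup E] [NormedSpace ℝ E]
    [FiniteDimensional ℝ E] [MeasurableSpace E] [BorelSpace E] (μ : Measure E)
    [μ.IsAddHaarMeasure] {f : E →ₗ[ℝ] ℝ} (hf : f ≠ 0) (c : ℝ) : μ {z | f z = c} = 0 := by
  have h_ae : ∀ᵐ z ∂μ, f z ∈ ({c}ᶜ : Set ℝ) :=
    (ae_comp_linearMap_mem_iff f μ volume (LinearMap.surjective hf)
      (measurableSet_singleton c).compl).2 (Measure.ae_ne volume c)
  simpa [ae_iff] using h_ae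

section Isometry

variable {E : Type*} [NormedAddCommGroup E] [InnerProductSpace ℝ E] [FiniteDimensional ℝ E]
  [MeasurableSpace E] [BorelSpace E]

theorem volume_convexHull_image_linearIsometryEquiv (σ : E ≃ₗᵢ[ℝ] E) (s : Set E) :
    volume (convexHull ℝ (σ '' s)) = volume (convexHull ℝ s) := by
  have h_image : σ '' convexHull ℝ s = convexHull ℝ (σ '' s) :=
    σ.toLinearEquiv.toLinearMap.image_convexHull s
  rw [← h_image, ← σ.measurePreserving.measure_preimage_emb
    σ.toHomeomorph.measurableEmbedding, σ.injective.preimage_image]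

theorem volume_convexHull_union_le_of_isometry {A B : Set E} {f : E →ₗ[ℝ] ℝ} (hf : f ≠ 0)
    {p q : E} (hp : p ∈ A) (hq : q ∈ B) (hfpq : f q = f p) (hA : ∀ x ∈ A, f x ≤ f p)
    (hB : ∀ y ∈ B, f p ≤ f y)
    (h_section : convexHull ℝ (A ∪ B) ∩ {z | f z = f p} ⊆ segment ℝ p q)
    {σ : E ≃ₗᵢ[ℝ] E} (hσp : σ p = q) (hfσ : ∀ x, f (σ x) = f x) :
    volume (convexHull ℝ (A ∪ B)) ≤ volume (convexHull ℝ (insert q (A ∪ σ '' B))) := by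
  have h_disjoint : AEDisjoint volume (convexHull ℝ (insert q A))
      (convexHull ℝ (insert q (σ '' B))) := by
    have h_le : convexHull ℝ (insert q A) ⊆ {z | f z ≤ f p} :=
      convexHull_min (Set.insert_subset hfpq.le hA) (convex_halfSpace_le f.isLinear _)
    have h_ge : convexHull ℝ (insert q (σ '' B)) ⊆ {z | f p ≤ f z} := by
      refine convexHull_min (Set.insert_subset hfpq.ge ?_) (convex_halfSpace_ge f.isLinear _)
      rintro _ ⟨y, hy, rfl⟩
      exact (hB y hy).trans_eq (hfσ y).symm
    exact measure_mono_null (fun z hz => (h_le hz.1).antisymm (h_ge hz.2))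
      (measure_levelSet_eq_zero volume hf (f p))
  calc volume (convexHull ℝ (A ∪ B))
      ≤ volume (convexHull ℝ (insert q A) ∪ convexHull ℝ (insert p B)) :=
        measure_mono (convexHull_union_subset_of_section_subset_segment hp hq hA hB h_section)
    _ ≤ volume (convexHull ℝ (insert q A)) + volume (convexHull ℝ (insert p B)) :=
        measure_union_le _ _
    _ = volume (convexHull ℝ (insert q A)) + volume (convexHull ℝ (insert q (σ '' B))) := by
        rw [← volume_convexHull_image_linearIsometryEquiv σ (insert p B), Set.image_insert_eq, hσp]
    _ = volume (convexHull ℝ (insert q A) ∪ convexHull ℝ (insert q (σ '' B))) :=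
        (measure_union₀ ((convex_convexHull ℝ _).nullMeasurableSet volume) h_disjoint).symm
    _ ≤ volume (convexHull ℝ (insert q (A ∪ σ '' B))) := by
        gcongr
        refine Set.union_subset (convexHull_mono ?_) (convexHull_mono ?_)
        exacts [Set.insert_subset_insert Set.subset_union_left,
          Set.insert_subset_insert Set.subset_union_right]

end Isometry

theorem closedBall_inter_levelSet_subset_segment {E : Type*} [NormedAddCommGroup E]
    [NormedSpace ℝ E] [StrictConvexSpace ℝ E] (hE : Module.finrank ℝ E = 2) {f : E →ₗ[ℝ] ℝ}
    (hf : f ≠ 0) {p q : E} {r : ℝ} (hp : ‖p‖ = r) (hq : ‖q‖ = r) (hpq : p ≠ q)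
    (hfq : f q = f p) : closedBall 0 r ∩ {z | f z = f p} ⊆ segment ℝ p q := by
  rintro z ⟨hz, hfz : f z = f p⟩
  have : FiniteDimensional ℝ E := .of_finrank_eq_succ hE
  have h_span : vectorSpan ℝ {p, z, q} ≤ LinearMap.ker f := by
    rw [vectorSpan_eq_span_vsub_set_right ℝ (Set.mem_insert p _), Submodule.span_le]
    rintro _ ⟨x, rfl | rfl | rfl, rfl⟩ <;> simp [hfq, hfz]
  have h_collinear : Collinear ℝ {p, z, q} := by
    have h_ker := Module.Dual.finrank_ker_add_one_of_ne_zero hf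
    rw [collinear_iff_finrank_le_one]
    exact (Submodule.finrank_mono h_span).trans (by lia)
  rw [mem_segment_iff_wbtw]
  exact h_collinear.wbtw_of_dist_eq_of_dist_le ((dist_zero_right p).trans hp) hz
    ((dist_zero_right q).trans hq) hpq

/-- The point `P`, regarded as an apex, together with the part of the unit ball lying opposite to
it. This is the region into which a polygon is rearranged, a rotated copy of a subset of `M`. -/
def apexCap {E : Type*} [NormedAddCommGroup E] [InnerProductSpace ℝ E] (P : E) : Set E :=
  insert P {z | ‖z‖ ≤ 1 ∧ ⟪z, P⟫ ≤ -1 / 2}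

theorem apexCap_southPole_subset_M : apexCap (!₂[0, -1] : Pt) ⊆ M := by
  rintro z (rfl | ⟨hz_norm, hz_inner⟩)
  · simp [M]
  have h_sqrt : √3 ^ 2 = 3 := Real.sq_sqrt (by norm_num)
  have h_inner : ⟪z, (!₂[0, -1] : Pt)⟫ = -z 1 := by simp [PiLp.inner_apply]
  have hz_sq : z 0 ^ 2 + z 1 ^ 2 ≤ 1 := by
    rwa [← sq_le_one_iff₀ (norm_nonneg z), EuclideanSpace.real_norm_sq_eq, Fin.sum_univ_two]
      at hz_norm
  have hz₀ : |√3 * z 0| ≤ 3 / 2 := by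
    apply abs_le_of_sq_le_sq _ (by norm_num)
    rw [mul_pow, h_sqrt]
    nlinarith
  obtain ⟨hz₀_ge, hz₀_le⟩ := abs_le.1 hz₀
  exact ⟨hz_sq, by linarith, by linarith⟩

theorem insert_union_image_subset_apexCap {E : Type*} [NormedAddCommGroup E]
    [InnerProductSpace ℝ E] {A B : Set E} {p q : E} (hA : ∀ x ∈ A, ‖x‖ ≤ 1)
    (hB : ∀ y ∈ B, ‖y‖ ≤ 1) (hAB : ∀ x ∈ A, ∀ y ∈ B, ⟪x, y⟫ ≤ -1 / 2) (hp : p ∈ A) (hq : q ∈ B)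
    {σ : E ≃ₗᵢ[ℝ] E} (hσp : σ p = q) : insert q (A ∪ σ '' B) ⊆ apexCap q := by
  rw [Set.insert_subset_iff]
  refine ⟨.inl rfl, Set.union_subset (fun x hx => .inr ⟨hA x hx, hAB x hx q hq⟩) ?_⟩
  rintro _ ⟨y, hy, rfl⟩
  refine .inr ⟨(σ.norm_map y).trans_le (hB y hy), ?_⟩
  rw [← hσp, σ.inner_map_map, real_inner_comm]
  exact hAB p hp y hy

theorem exists_subset_M_of_subset_apexCap {P : Pt} (hP : ‖P‖ = 1) {T : Finset Pt}
    (hT : (T : Set Pt) ⊆ apexCap P) :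
    ∃ T' : Finset Pt, (T' : Set Pt) ⊆ M ∧ T'.card ≤ T.card ∧
      volume (convexHull ℝ (T' : Set Pt)) = volume (convexHull ℝ (T : Set Pt)) := by
  classical
  let N : Pt := !₂[0, -1]
  have hN : ‖N‖ = 1 := by simp [N, EuclideanSpace.norm_eq]
  let σ := (ℝ ∙ (P - N))ᗮ.reflection
  have hσP : σ P = N := Submodule.reflection_sub (hP.trans hN.symm)
  have hσ : σ '' apexCap P ⊆ apexCap N := by
    rintro _ ⟨x, rfl | ⟨hx_norm, hx_inner⟩, rfl⟩
    · exact .inl hσP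
    · refine .inr ⟨by rwa [σ.norm_map], ?_⟩
      rwa [← hσP, σ.inner_map_map]
  refine ⟨T.image σ, ?_, Finset.card_image_le, ?_⟩ <;> rw [Finset.coe_image]
  · exact (Set.image_mono hT).trans (hσ.trans apexCap_southPole_subset_M)
  · exact volume_convexHull_image_linearIsometryEquiv σ T

theorem card_insert_union_le_of_inter_nonempty {α : Type*} [DecidableEq α] {A C : Finset α}
    (h : (A ∩ C).Nonempty) (x : α) : (insert x (A ∪ C)).card ≤ A.card + C.card := by
  have h_inter := Finset.card_pos.2 h
  have h_union := Finset.card_union_add_card_inter A C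
  have h_insert := Finset.card_insert_le x (A ∪ C)
  lia

theorem exists_subset_apexCap_volume_ge_of_separated {E : Type*} [NormedAddCommGroup E]
    [InnerProductSpace ℝ E] [MeasurableSpace E] [BorelSpace E]
    [FiniteDimensional ℝ E] (hE : Module.finrank ℝ E = 2) {A B : Finset E} {p q N : E}
    (hA : ∀ x ∈ A, ‖x‖ ≤ 1 ∧ ⟪N, x⟫ ≤ ⟪N, p⟫) (hB : ∀ y ∈ B, ‖y‖ ≤ 1 ∧ ⟪N, p⟫ ≤ ⟪N, y⟫)
    (hAB : ∀ x ∈ A, ∀ y ∈ B, ⟪x, y⟫ ≤ -1 / 2) (hp : p ∈ A) (hq : q ∈ B) (hp₁ : ‖p‖ = 1)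
    (hq₁ : ‖q‖ = 1) (hN : N ≠ 0) (hNq : ⟪N, q⟫ = ⟪N, p⟫) :
    ∃ T : Finset E, (T : Set E) ⊆ apexCap q ∧ T.card ≤ A.card + B.card ∧
      volume (convexHull ℝ (A ∪ B : Set E)) ≤ volume (convexHull ℝ (T : Set E)) := by
  classical
  have hpq : p ≠ q := by
    rintro rfl
    have h := hAB p hp p hq
    rw [real_inner_self_eq_norm_sq, hp₁] at h
    norm_num at h
  let f : E →ₗ[ℝ] ℝ := innerₛₗ ℝ N
  have hf : f ≠ 0 := fun h => hN (inner_self_eq_zero.1 (DFunLike.congr_fun h N))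
  have h_ball : (A ∪ B : Set E) ⊆ closedBall 0 1 := by
    rintro x (hx | hx)
    exacts [mem_closedBall_zero_iff.2 (hA x hx).1, mem_closedBall_zero_iff.2 (hB x hx).1]
  have h_section : convexHull ℝ (A ∪ B : Set E) ∩ {z | f z = f p} ⊆ segment ℝ p q :=
    (Set.inter_subset_inter_left _ (convexHull_min h_ball (convex_closedBall _ _))).trans
      (closedBall_inter_levelSet_subset_segment hE hf hp₁ hq₁ hpq hNq)
  let σ := (ℝ ∙ (p - q))ᗮ.reflection
  have hσp : σ p = q := Submodule.reflection_sub (hp₁.trans hq₁.symm)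
  have hσq : σ q = p := by rw [← hσp, Submodule.reflection_reflection]
  have hσN : σ N = N := by
    apply Submodule.reflection_mem_subspace_eq_self
    rw [Submodule.mem_orthogonal_singleton_iff_inner_left, inner_sub_right, hNq, sub_self]
  have hfσ (x : E) : f (σ x) = f x := calc
    ⟪N, σ x⟫ = ⟪σ N, σ x⟫ := by rw [hσN]
    _ = ⟪N, x⟫ := σ.inner_map_map N x
  refine ⟨insert q (A ∪ B.image σ), ?_, ?_, ?_⟩
  · rw [Finset.coe_insert, Finset.coe_union, Finset.coe_image]
    exact insert_union_image_subset_apexCap (fun x hx => (hA x hx).1) (fun y hy => (hB y hy).1)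
      hAB hp hq hσp
  · have hp_inter : p ∈ A ∩ B.image σ :=
      Finset.mem_inter.2 ⟨hp, Finset.mem_image.2 ⟨q, hq, hσq⟩⟩
    exact (card_insert_union_le_of_inter_nonempty ⟨p, hp_inter⟩ q).trans
      (by grw [Finset.card_image_le])
  · rw [Finset.coe_insert, Finset.coe_union, Finset.coe_image]
    exact volume_convexHull_union_le_of_isometry hf hp hq hNq (fun x hx => (hA x hx).2)
      (fun y hy => (hB y hy).2) h_section hσp hfσ

theorem circlePt_image_Icc_subset_apexCap {a b : ℝ} (hba : b ≤ a + 2 * π / 3) :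
    circlePt '' Set.Icc a b ⊆ apexCap (circlePt ((a + b) / 2 + π)) := by
  rintro _ ⟨t, ⟨hat, htb⟩, rfl⟩
  refine .inr ⟨(norm_circlePt t).le, ?_⟩
  rw [inner_circlePt, cos_le_neg_half_iff (by grind), abs_of_nonpos (by linarith [pi_pos])]
  constructor <;> linarith

theorem exists_subset_apexCap_volume_ge_of_nonempty_arcs {a b : ℝ} {A B : Finset Pt}
    (hA : (A : Set Pt) ⊆ circlePt '' Set.Icc a b)
    (hB : (B : Set Pt) ⊆ circlePt '' Set.Icc (b + 2 * π / 3) (a + 4 * π / 3))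
    (hA₀ : A.Nonempty) (hB₀ : B.Nonempty) :
    ∃ q : Pt, ‖q‖ = 1 ∧ ∃ T : Finset Pt, (T : Set Pt) ⊆ apexCap q ∧ T.card ≤ A.card + B.card ∧
      volume (convexHull ℝ (A ∪ B : Set Pt)) ≤ volume (convexHull ℝ (T : Set Pt)) := by
  obtain ⟨α, ⟨haα, hαb⟩, hα_mem, hAα⟩ := exists_last_of_finset_subset_image_Icc hA₀ hA
  obtain ⟨β, ⟨hbβ, hβa⟩, hβ_mem, hBβ⟩ := exists_last_of_finset_subset_image_Icc hB₀ hB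
  have h_left : ⟪circlePt ((α + β) / 2), circlePt α⟫ = cos ((β - α) / 2) := by
    rw [inner_circlePt]
    ring_nf
  have h_right : ⟪circlePt ((α + β) / 2), circlePt β⟫ = cos ((β - α) / 2) := by
    rw [inner_circlePt, ← cos_neg]
    ring_nf
  refine ⟨circlePt β, norm_circlePt β, exists_subset_apexCap_volume_ge_of_separated (by simp)
    (N := circlePt ((α + β) / 2)) ?_ ?_ ?_ hα_mem hβ_mem (norm_circlePt α) (norm_circlePt β)
    (norm_ne_zero_iff.1 (by simp [norm_circlePt])) (h_right.trans h_left.symm)⟩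
  · intro x hx
    obtain ⟨ξ, ⟨haξ, hξα⟩, rfl⟩ := hAα hx
    refine ⟨(norm_circlePt ξ).le, ?_⟩
    rw [h_left, inner_circlePt,
      cos_le_cos_iff_abs_mem_Icc ⟨by linarith [pi_pos], by linarith⟩ (by grind),
      abs_of_nonneg (by linarith [pi_pos])]
    constructor <;> linarith
  · intro y hy
    obtain ⟨η, ⟨hbη, hηβ⟩, rfl⟩ := hBβ hy
    refine ⟨(norm_circlePt η).le, ?_⟩
    rw [h_left, inner_circlePt, ← cos_abs ((α + β) / 2 - η)]
    exact cos_le_cos_of_nonneg_of_le_pi (abs_nonneg _) (by linarith)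
      (abs_le.2 ⟨by linarith, by linarith [pi_pos]⟩)
  · intro x hx y hy
    obtain ⟨ξ, ⟨haξ, hξb⟩, rfl⟩ := hA hx
    obtain ⟨η, ⟨hbη, hηa⟩, rfl⟩ := hB hy
    rw [inner_circlePt, cos_le_neg_half_iff (by grind), abs_of_nonpos (by linarith [pi_pos])]
    constructor <;> linarith

theorem exists_subset_apexCap_volume_ge_of_subset_arcs {a b : ℝ} (hab : a ≤ b)
    (hba : b ≤ a + 2 * π / 3) {S : Finset Pt} (hS : (S : Set Pt) ⊆
      circlePt '' Set.Icc a b ∪ circlePt '' Set.Icc (b + 2 * π / 3) (a + 4 * π / 3)) :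
    ∃ P : Pt, ‖P‖ = 1 ∧ ∃ T : Finset Pt, (T : Set Pt) ⊆ apexCap P ∧ T.card ≤ S.card ∧
      volume (convexHull ℝ (S : Set Pt)) ≤ volume (convexHull ℝ (T : Set Pt)) := by
  classical
  let A := S.filter (· ∈ circlePt '' Set.Icc a b)
  let B := S.filter (· ∉ circlePt '' Set.Icc a b)
  have hA : (A : Set Pt) ⊆ circlePt '' Set.Icc a b := fun x hx => (Finset.mem_filter.1 hx).2
  have hB : (B : Set Pt) ⊆ circlePt '' Set.Icc (b + 2 * π / 3) (a + 4 * π / 3) := fun x hx =>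
    (hS (Finset.mem_filter.1 hx).1).resolve_left (Finset.mem_filter.1 hx).2
  have hAB : A ∪ B = S := Finset.filter_union_filter_not_eq _ S
  rcases A.eq_empty_or_nonempty with hA₀ | hA₀
  · rw [hA₀, Finset.empty_union] at hAB
    exact ⟨_, norm_circlePt _, S,
      (hAB ▸ hB).trans (circlePt_image_Icc_subset_apexCap (by linarith)), le_rfl, le_rfl⟩
  rcases B.eq_empty_or_nonempty with hB₀ | hB₀
  · rw [hB₀, Finset.union_empty] at hAB
    exact ⟨_, norm_circlePt _, S, (hAB ▸ hA).trans (circlePt_image_Icc_subset_apexCap hba),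
      le_rfl, le_rfl⟩
  have h_card : A.card + B.card = S.card := Finset.card_filter_add_card_filter_not _
  rw [← h_card, ← hAB, Finset.coe_union]
  exact exists_subset_apexCap_volume_ge_of_nonempty_arcs hA hB hA₀ hB₀

/-- Any polygon with at most `n` vertices inscribed in `M'(u,v)` (for `θ ∈ [2π/3, π]`) can be
replaced by one of at least the same area with at most `n` vertices inscribed in `M`. -/
theorem M_inscribed_ge_M' (θ : ℝ) (hθ : θ ∈ Set.Icc (2 * π / 3) π) (u v : Pt)
    (hu : ‖u‖ = 1) (hv : ‖v‖ = 1) (huv : ⟪u, v⟫ = Real.cos θ)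
    (n : ℕ) (hn : 3 ≤ n) (S : Finset Pt) (hS : (S : Set Pt) ⊆ M' u v) (hcard : S.card ≤ n) :
    ∃ T : Finset Pt, (T : Set Pt) ⊆ M ∧ T.card ≤ n ∧
      volume (convexHull ℝ (S : Set Pt)) ≤ volume (convexHull ℝ (T : Set Pt)) := by
  have h_inner : ⟪u, v⟫ ≤ -1 / 2 := by
    rw [huv, cos_le_neg_half_iff (by rw [abs_of_nonneg] <;> linarith [hθ.1, hθ.2, pi_pos]),
      abs_of_nonneg (by linarith [hθ.1, pi_pos])]
    exact ⟨hθ.1, by linarith [hθ.2, pi_pos]⟩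
  obtain ⟨S', hS', hS'_card, hS'_volume⟩ :=
    exists_finset_subset_extremePoints_measure_convexHull_ge volume (isCompact_M' u v) hS
  obtain ⟨a, b, hab, hba, h_arcs⟩ := exists_M'_inter_sphere_subset_arcs hu hv h_inner
  have hS'_arcs := (hS'.trans (extremePoints_M'_subset_sphere hu hv h_inner)).trans h_arcs
  obtain ⟨P, hP, R, hR, hR_card, hR_volume⟩ :=
    exists_subset_apexCap_volume_ge_of_subset_arcs hab hba hS'_arcs
  obtain ⟨T, hT, hT_card, hT_volume⟩ := exists_subset_M_of_subset_apexCap hP hR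
  exact ⟨T, hT, hT_card.trans (hR_card.trans (hS'_card.trans hcard)),
    hS'_volume.trans (hR_volume.trans_eq hT_volume.symm)⟩
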